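/- Let n ≥ 1, r ≥ 1, d ≥ 1 be integers and let S ⊆ [n]^r be a d-maximal subset of [n]^r such that for every a ∈ S and every coordinate i ∈ [r] there is b ∈ S with a_i = b_i and dist(a,b) = d. Then S, viewed as a subset of [n+1]^r via the inclusion of alphabets [n] ⊆ [n+1], is d-maximal as a subset of [n+1]^r. -/

import Mathlib

/-- `S ⊆ [m]^r` is `d`-maximal: it has diameter `d` and any word within Hamming
distance `d` of all of `S` already belongs to `S`. -/
def IsDMaximalFin (m r d : ℕ) (S : Set (Fin r → Fin m)) : Prop :=
  (∀ a ∈ S, ∀ b ∈ S, hammingDist a b ≤ d) ∧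
  (∃ a ∈ S, ∃ b ∈ S, hammingDist a b = d) ∧
  (∀ x : Fin r → Fin m, (∀ s ∈ S, hammingDist x s ≤ d) → x ∈ S)

/-!
Retract each enlarged alphabet onto the original one. The retraction `g` does not increase Hamming
distances and fixes the original words, so if `x` is within distance `d` of all of `S`, then so is
`g x`, and `g x ∈ S` by maximality. If `g` changed `x` at a coordinate `i`, then the word `b ∈ S`
at distance `d` from `g x` agreeing with it at `i` would differ from `x` at `i`, whence
`dist(x, b) > dist(g x, b) = d`, a contradiction.
-/

section

variable {ι : Type*} [Fintype ι] {α β : ι → Type*}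
  [∀ i, DecidableEq (α i)] [∀ i, DecidableEq (β i)]

theorem hammingDist_comp_lt_hammingDist (g : ∀ i, β i → α i) {x y : ∀ i, β i} {i : ι}
    (hne : x i ≠ y i) (heq : g i (x i) = g i (y i)) :
    hammingDist (fun j => g j (x j)) (fun j => g j (y j)) < hammingDist x y := by
  refine Finset.card_lt_card ((Finset.ssubset_iff_of_subset ?_).2 ⟨i, ?_, ?_⟩)
  · exact Finset.monotone_filter_right _ fun j _ hj => mt (congrArg (g j)) hj
  · simpa using hne
  · simpa using heq

/-- `d`-maximality of a set of words indexed by a finite type, where the `i`-th letter ranges over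
its own alphabet `α i`, which may be infinite. For the constant alphabet `Fin m` and positions
`Fin r` this unfolds to `IsDMaximalFin m r d S`. -/
def IsDMaximal (d : ℕ) (S : Set (∀ i, α i)) : Prop :=
  (∀ a ∈ S, ∀ b ∈ S, hammingDist a b ≤ d) ∧
  (∃ a ∈ S, ∃ b ∈ S, hammingDist a b = d) ∧
  (∀ x : ∀ i, α i, (∀ s ∈ S, hammingDist x s ≤ d) → x ∈ S)

variable {f : ∀ i, α i → β i} {g : ∀ i, β i → α i} {d : ℕ} {S : Set (∀ i, α i)}

theorem hammingDist_piMap_le_of_leftInverse (hgf : ∀ i, Function.LeftInverse (g i) (f i))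
    (x : ∀ i, β i) (s : ∀ i, α i) :
    hammingDist (Pi.map g x) s ≤ hammingDist x (Pi.map f s) := by
  calc
    hammingDist (Pi.map g x) s = hammingDist (Pi.map g x) (Pi.map g (Pi.map f s)) :=
      congrArg _ (funext fun i => (hgf i (s i)).symm)
    _ ≤ hammingDist x (Pi.map f s) := hammingDist_comp_le_hammingDist g

theorem hammingDist_piMap_lt_of_leftInverse (hgf : ∀ i, Function.LeftInverse (g i) (f i))
    {x : ∀ i, β i} {s : ∀ i, α i} {i : ι} (hne : x i ≠ f i (s i)) (heq : g i (x i) = s i) :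
    hammingDist (Pi.map g x) s < hammingDist x (Pi.map f s) := by
  calc
    hammingDist (Pi.map g x) s = hammingDist (Pi.map g x) (Pi.map g (Pi.map f s)) :=
      congrArg _ (funext fun j => (hgf j (s j)).symm)
    _ < hammingDist x (Pi.map f s) :=
      hammingDist_comp_lt_hammingDist g hne (heq.trans (hgf i (s i)).symm)

theorem piMap_piMap_eq_self_of_hammingDist_le (hgf : ∀ i, Function.LeftInverse (g i) (f i))
    {x : ∀ i, β i} (hx : ∀ s ∈ S, hammingDist x (Pi.map f s) ≤ d)
    (hpartner : ∀ i, ∃ b ∈ S, g i (x i) = b i ∧ hammingDist (Pi.map g x) b = d) :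
    Pi.map f (Pi.map g x) = x := by
  by_contra hfg
  obtain ⟨i, hi⟩ := Function.ne_iff.mp hfg
  obtain ⟨b, hb, hib, hdist⟩ := hpartner i
  have hne : x i ≠ f i (b i) := hib ▸ hi.symm
  have hlt := hammingDist_piMap_lt_of_leftInverse hgf hne hib
  exact (hdist ▸ hlt).not_ge (hx b hb)

theorem stmt6_general (hf : ∀ i, Function.Injective (f i)) (hmax : IsDMaximal d S)
    (hcond : ∀ a ∈ S, ∀ i, ∃ b ∈ S, a i = b i ∧ hammingDist a b = d) :
    IsDMaximal d (Pi.map f '' S) := by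
  obtain ⟨hle, ⟨a, ha, b, hb, hab⟩, hmem⟩ := hmax
  have hdist (u v : ∀ i, α i) : hammingDist (Pi.map f u) (Pi.map f v) = hammingDist u v :=
    hammingDist_comp f hf
  refine ⟨?_, ⟨_, ⟨a, ha, rfl⟩, _, ⟨b, hb, rfl⟩, (hdist a b).trans hab⟩, fun x hx => ?_⟩
  · rintro _ ⟨u, hu, rfl⟩ _ ⟨v, hv, rfl⟩
    exact (hdist u v).trans_le (hle u hu v hv)
  · have : ∀ i, Nonempty (α i) := fun i => ⟨a i⟩
    choose g hgf using fun i => (hf i).hasLeftInverse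
    rw [Set.forall_mem_image] at hx
    have hgx : Pi.map g x ∈ S := hmem _ fun s hs =>
      (hammingDist_piMap_le_of_leftInverse hgf x s).trans (hx hs)
    exact ⟨_, hgx, piMap_piMap_eq_self_of_hammingDist_le hgf (@hx) (hcond _ hgx)⟩

end

theorem stmt6 (n r d : ℕ) (hn : 1 ≤ n) (hr : 1 ≤ r) (hd : 1 ≤ d)
    (S : Set (Fin r → Fin n)) (hmax : IsDMaximalFin n r d S)
    (hcond : ∀ a ∈ S, ∀ i : Fin r, ∃ b ∈ S, a i = b i ∧ hammingDist a b = d) :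
    IsDMaximalFin (n + 1) r d ((fun (a : Fin r → Fin n) (i : Fin r) => Fin.castSucc (a i)) '' S) :=
  stmt6_general (fun _ => Fin.castSucc_injective n) hmax hcond
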